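/- arXiv:2407.00414 — 5 statements merged into one kernel-verified Lean document; each statement's English description precedes it below -/
import Mathlib

section
/- (Feasibility of the safety-stability filter.) Suppose (i) V satisfies the control Lyapunov condition: for every x ∈ ℝⁿ there exists u ∈ ℝᵐ with 𝓛_f V(x) + ⟨𝓛_g V(x), u⟩ + γ(x) ≤ 0; and (ii) b and V satisfy the relaxed compatibility condition: for every x ∈ ℝⁿ with b(x) = 0 there exists u ∈ ℝᵐ with 𝓛_f b(x) + ⟨𝓛_g b(x), u⟩ ≥ 0 and 𝓛_f V(x) + ⟨𝓛_g V(x), u⟩ ≤ 0. Then for every x ∈ ℝⁿ the feasible set of the filter quadratic program is nonempty: there exist u ∈ ℝᵐ and s ∈ ℝ with F₁(u, s) ≥ 0 and F₂(u) ≤ 0. -/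
open RealInnerProductSpace Matrix

noncomputable section

/-- Lie derivative of `h` along the drift `f`: `𝓛_f h (x) = ⟪∇h(x), f(x)⟫`. -/
def Lf {n : ℕ} (f : EuclideanSpace ℝ (Fin n) → EuclideanSpace ℝ (Fin n))
    (h : EuclideanSpace ℝ (Fin n) → ℝ) (x : EuclideanSpace ℝ (Fin n)) : ℝ :=
  ⟪gradient h x, f x⟫

/-- Lie derivative of `h` along the input matrix `g`: `𝓛_g h (x) = g(x)ᵀ ∇h(x) ∈ ℝᵐ`. -/
def Lg {n m : ℕ} (g : EuclideanSpace ℝ (Fin n) → Matrix (Fin n) (Fin m) ℝ)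
    (h : EuclideanSpace ℝ (Fin n) → ℝ) (x : EuclideanSpace ℝ (Fin n)) :
    EuclideanSpace ℝ (Fin m) :=
  Matrix.toEuclideanLin ((g x)ᵀ) (gradient h x)

/-- A continuous function `α : ℝ → ℝ` is extended class-K if it is strictly increasing
and vanishes at `0`. -/
def ExtendedClassK (α : ℝ → ℝ) : Prop :=
  Continuous α ∧ StrictMono α ∧ α 0 = 0

/-- A continuous function `γ : ℝⁿ → ℝ` is positive definite if `γ(0) = 0` and `γ(x) > 0`
for all `x ≠ 0`. -/
def PosDef {n : ℕ} (γ : EuclideanSpace ℝ (Fin n) → ℝ) : Prop :=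
  Continuous γ ∧ γ 0 = 0 ∧ ∀ x, x ≠ 0 → 0 < γ x

/-- Feasibility of the safety-stability filter: if `V` satisfies the control Lyapunov
condition and `b`, `V` satisfy the relaxed compatibility condition, then for every state
the feasible set of the filter quadratic program is nonempty. -/
theorem filter_feasibility {n m : ℕ}
    (f : EuclideanSpace ℝ (Fin n) → EuclideanSpace ℝ (Fin n))
    (g : EuclideanSpace ℝ (Fin n) → Matrix (Fin n) (Fin m) ℝ)
    (b V : EuclideanSpace ℝ (Fin n) → ℝ)
    (α β : ℝ → ℝ) (γ : EuclideanSpace ℝ (Fin n) → ℝ) (p : ℝ)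
    (hb : Differentiable ℝ b) (hV : Differentiable ℝ V)
    (hp : 0 < p)
    (hα : ExtendedClassK α) (hβ : ExtendedClassK β) (hβ1 : ∀ r, β r ≤ 1)
    (hγ : PosDef γ)
    -- (i) the control Lyapunov condition for `V`
    (hclf : ∀ x, ∃ u : EuclideanSpace ℝ (Fin m),
      Lf f V x + ⟪Lg g V x, u⟫ + γ x ≤ 0)
    -- (ii) relaxed compatibility of `b` and `V`
    (hrc : ∀ x, b x = 0 → ∃ u : EuclideanSpace ℝ (Fin m),
      0 ≤ Lf f b x + ⟪Lg g b x, u⟫ ∧ Lf f V x + ⟪Lg g V x, u⟫ ≤ 0) :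
    ∀ x, ∃ (u : EuclideanSpace ℝ (Fin m)) (s : ℝ),
      0 ≤ Lf f b x + ⟪Lg g b x, u⟫ + s * α (b x) ∧
      Lf f V x + ⟪Lg g V x, u⟫ + β (b x) * γ x ≤ 0 := by
  intro x
  obtain ⟨-, hα_mono, hα_zero⟩ := hα
  by_cases hbx : b x = 0
  · obtain ⟨u, hub, huV⟩ := hrc x hbx
    refine ⟨u, 0, by simpa using hub, ?_⟩
    simpa [hbx, hβ.2.2] using huV
  · obtain ⟨u, hu⟩ := hclf x
    have hαx : α (b x) ≠ 0 := fun h => hbx (hα_mono.injective (h.trans hα_zero.symm))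
    have hγx : 0 ≤ γ x := by
      rcases eq_or_ne x 0 with rfl | hx
      · exact hγ.2.1.ge
      · exact (hγ.2.2 x hx).le
    refine ⟨u, -(Lf f b x + ⟪Lg g b x, u⟫) / α (b x), ?_, ?_⟩
    · rw [div_mul_cancel₀ _ hαx, add_neg_cancel]
    · linarith [mul_le_of_le_one_left hγx (hβ1 (b x))]
end
end

section
/- (Closed-form solution, CBF constraint active.) Fix x ∈ ℝⁿ and suppose F'_b(x) ≠ 0, F_b(x) ≤ 0, and F_V(x)·F'_b(x) − F_b(x)·⟨𝓛_g V(x), 𝓛_g b(x)⟩ < 0. Then the pair u* = π(x) − (F_b(x)/F'_b(x))·𝓛_g b(x), s* = 1 − F_b(x)·α(b(x))/(p·F'_b(x)) satisfies F₁(u*, s*) = 0 and F₂(u*) < 0, is feasible, and is the unique global minimizer of the safety-stability filter quadratic program at x. -/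
open RealInnerProductSpace Matrix

noncomputable section

/-- A continuous function `γ : ℝⁿ → ℝ` is positive definite if `γ(0) = 0` and `γ(x) > 0`
for all `x ≠ 0`. -/
def PosDefFun {n : ℕ} (γ : EuclideanSpace ℝ (Fin n) → ℝ) : Prop :=
  Continuous γ ∧ γ 0 = 0 ∧ ∀ x, x ≠ 0 → 0 < γ x

/-- The CBF constraint function `F₁(u, s)` of the safety-stability filter. -/
def F1 {n m : ℕ} (f : EuclideanSpace ℝ (Fin n) → EuclideanSpace ℝ (Fin n))
    (g : EuclideanSpace ℝ (Fin n) → Matrix (Fin n) (Fin m) ℝ)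
    (b : EuclideanSpace ℝ (Fin n) → ℝ) (α : ℝ → ℝ)
    (x : EuclideanSpace ℝ (Fin n)) (u : EuclideanSpace ℝ (Fin m)) (s : ℝ) : ℝ :=
  Lf f b x + ⟪Lg g b x, u⟫ + s * α (b x)

/-- The CLF constraint function `F₂(u)` of the safety-stability filter. -/
def F2 {n m : ℕ} (f : EuclideanSpace ℝ (Fin n) → EuclideanSpace ℝ (Fin n))
    (g : EuclideanSpace ℝ (Fin n) → Matrix (Fin n) (Fin m) ℝ)
    (V b : EuclideanSpace ℝ (Fin n) → ℝ) (β : ℝ → ℝ)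
    (γ : EuclideanSpace ℝ (Fin n) → ℝ)
    (x : EuclideanSpace ℝ (Fin n)) (u : EuclideanSpace ℝ (Fin m)) : ℝ :=
  Lf f V x + ⟪Lg g V x, u⟫ + β (b x) * γ x

/-- `F_b(x) = 𝓛_f b(x) + ⟨𝓛_g b(x), π(x)⟩ + α(b(x))`. -/
def Fb {n m : ℕ} (f : EuclideanSpace ℝ (Fin n) → EuclideanSpace ℝ (Fin n))
    (g : EuclideanSpace ℝ (Fin n) → Matrix (Fin n) (Fin m) ℝ)
    (b : EuclideanSpace ℝ (Fin n) → ℝ) (α : ℝ → ℝ)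
    (π : EuclideanSpace ℝ (Fin n) → EuclideanSpace ℝ (Fin m))
    (x : EuclideanSpace ℝ (Fin n)) : ℝ :=
  Lf f b x + ⟪Lg g b x, π x⟫ + α (b x)

/-- `F'_b(x) = ‖𝓛_g b(x)‖² + α(b(x))²/p`. -/
def FbP {n m : ℕ} (g : EuclideanSpace ℝ (Fin n) → Matrix (Fin n) (Fin m) ℝ)
    (b : EuclideanSpace ℝ (Fin n) → ℝ) (α : ℝ → ℝ) (p : ℝ)
    (x : EuclideanSpace ℝ (Fin n)) : ℝ :=
  ‖Lg g b x‖ ^ 2 + α (b x) ^ 2 / p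

/-- `F_V(x) = 𝓛_f V(x) + ⟨𝓛_g V(x), π(x)⟩ + β(b(x))·γ(x)`. -/
def FV {n m : ℕ} (f : EuclideanSpace ℝ (Fin n) → EuclideanSpace ℝ (Fin n))
    (g : EuclideanSpace ℝ (Fin n) → Matrix (Fin n) (Fin m) ℝ)
    (V b : EuclideanSpace ℝ (Fin n) → ℝ) (β : ℝ → ℝ)
    (γ : EuclideanSpace ℝ (Fin n) → ℝ)
    (π : EuclideanSpace ℝ (Fin n) → EuclideanSpace ℝ (Fin m))
    (x : EuclideanSpace ℝ (Fin n)) : ℝ :=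
  Lf f V x + ⟪Lg g V x, π x⟫ + β (b x) * γ x

/-- Objective function `J(u, s) = ½‖u − π(x)‖² + (p/2)(s − 1)²` of the filter QP. -/
def Jobj {n m : ℕ} (π : EuclideanSpace ℝ (Fin n) → EuclideanSpace ℝ (Fin m)) (p : ℝ)
    (x : EuclideanSpace ℝ (Fin n)) (u : EuclideanSpace ℝ (Fin m)) (s : ℝ) : ℝ :=
  (1 / 2) * ‖u - π x‖ ^ 2 + (p / 2) * (s - 1) ^ 2

/-- Second-order expansion of the filter objective at a point `(v, t)` that is stationary for the
Lagrangian with multiplier `c` of the CBF constraint. -/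
theorem Jobj_eq_add_of_stationary {n m : ℕ}
    (f : EuclideanSpace ℝ (Fin n) → EuclideanSpace ℝ (Fin n))
    (g : EuclideanSpace ℝ (Fin n) → Matrix (Fin n) (Fin m) ℝ)
    (b : EuclideanSpace ℝ (Fin n) → ℝ) (α : ℝ → ℝ)
    (π : EuclideanSpace ℝ (Fin n) → EuclideanSpace ℝ (Fin m)) (p : ℝ)
    (x : EuclideanSpace ℝ (Fin n)) (c : ℝ) (v : EuclideanSpace ℝ (Fin m)) (t : ℝ)
    (hv : v - π x = c • Lg g b x) (ht : p * (t - 1) = c * α (b x))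
    (u : EuclideanSpace ℝ (Fin m)) (s : ℝ) :
    Jobj π p x u s = Jobj π p x v t + c * (F1 f g b α x u s - F1 f g b α x v t) +
      ((1 / 2) * ‖u - v‖ ^ 2 + (p / 2) * (s - t) ^ 2) := by
  have hnorm : ‖u - π x‖ ^ 2 =
      ‖u - v‖ ^ 2 + 2 * (c * (⟪Lg g b x, u⟫ - ⟪Lg g b x, v⟫)) + ‖v - π x‖ ^ 2 := by
    rw [← sub_add_sub_cancel u v (π x), norm_add_sq_real, hv, inner_smul_right,
      real_inner_comm, inner_sub_right]
  unfold Jobj F1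
  rw [hnorm]
  linear_combination (s - t) * ht

/-- Closed-form solution of the filter QP when only the CBF constraint is active:
under the stated sign conditions, `u* = π(x) − (F_b/F'_b)·𝓛_g b(x)` and
`s* = 1 − F_b·α(b(x))/(p·F'_b)` give the unique global minimizer, with
`F₁(u*, s*) = 0` and `F₂(u*) < 0`. -/
theorem filter_solution_cbf_active {n m : ℕ}
    (f : EuclideanSpace ℝ (Fin n) → EuclideanSpace ℝ (Fin n))
    (g : EuclideanSpace ℝ (Fin n) → Matrix (Fin n) (Fin m) ℝ)
    (b V : EuclideanSpace ℝ (Fin n) → ℝ)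
    (α β : ℝ → ℝ) (γ : EuclideanSpace ℝ (Fin n) → ℝ)
    (π : EuclideanSpace ℝ (Fin n) → EuclideanSpace ℝ (Fin m)) (p : ℝ)
    (hb : Differentiable ℝ b) (hV : Differentiable ℝ V)
    (hp : 0 < p)
    (hα : ExtendedClassK α) (hβ : ExtendedClassK β) (hβ1 : ∀ r, β r ≤ 1)
    (hγ : PosDefFun γ)
    (x : EuclideanSpace ℝ (Fin n))
    (hFbP : FbP g b α p x ≠ 0) (hFb : Fb f g b α π x ≤ 0)
    (hcond : FV f g V b β γ π x * FbP g b α p x -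
      Fb f g b α π x * ⟪Lg g V x, Lg g b x⟫ < 0)
    (ustar : EuclideanSpace ℝ (Fin m)) (sstar : ℝ)
    (hustar : ustar = π x - (Fb f g b α π x / FbP g b α p x) • Lg g b x)
    (hsstar : sstar = 1 - Fb f g b α π x * α (b x) / (p * FbP g b α p x)) :
    F1 f g b α x ustar sstar = 0 ∧
    F2 f g V b β γ x ustar < 0 ∧
    (0 ≤ F1 f g b α x ustar sstar ∧ F2 f g V b β γ x ustar ≤ 0) ∧
    (∀ (u : EuclideanSpace ℝ (Fin m)) (s : ℝ),
      0 ≤ F1 f g b α x u s → F2 f g V b β γ x u ≤ 0 →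
        Jobj π p x ustar sstar ≤ Jobj π p x u s ∧
        ((u, s) ≠ (ustar, sstar) → Jobj π p x ustar sstar < Jobj π p x u s)) := by
  have hF1 : F1 f g b α x ustar sstar = 0 := by
    have hsum : ‖Lg g b x‖ ^ 2 = FbP g b α p x - α (b x) ^ 2 / p := by simp [FbP]
    have hLf : Lf f b x = Fb f g b α π x - ⟪Lg g b x, π x⟫ - α (b x) := by
      unfold Fb; ring
    rw [F1, hustar, hsstar, inner_sub_right, inner_smul_right, real_inner_self_eq_norm_sq,
      hsum, hLf]
    field_simp
    ring
  have hFbP_pos : 0 < FbP g b α p x :=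
    lt_of_le_of_ne (by unfold FbP; positivity) hFbP.symm
  have hF2 : F2 f g V b β γ x ustar < 0 := by
    have hquot : F2 f g V b β γ x ustar = (FV f g V b β γ π x * FbP g b α p x -
        Fb f g b α π x * ⟪Lg g V x, Lg g b x⟫) / FbP g b α p x := by
      have hLf : Lf f V x = FV f g V b β γ π x - ⟪Lg g V x, π x⟫ - β (b x) * γ x := by
        unfold FV; ring
      rw [F2, hustar, inner_sub_right, inner_smul_right, hLf]
      field_simp
      ring
    rw [hquot]
    exact div_neg_of_neg_of_pos hcond hFbP_pos
  refine ⟨hF1, hF2, ⟨hF1.ge, hF2.le⟩, fun u s hu _ => ?_⟩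
  have hJ := Jobj_eq_add_of_stationary f g b α π p x (-(Fb f g b α π x / FbP g b α p x))
    ustar sstar (by rw [hustar, neg_smul]; abel) (by rw [hsstar]; field_simp; ring) u s
  rw [hF1, sub_zero] at hJ
  have hmul : 0 ≤ -(Fb f g b α π x / FbP g b α p x) * F1 f g b α x u s :=
    mul_nonneg (neg_nonneg.2 (div_nonpos_of_nonpos_of_nonneg hFb hFbP_pos.le)) hu
  have hu_sq : 0 ≤ (1 / 2) * ‖u - ustar‖ ^ 2 := by positivity
  have hs_sq : 0 ≤ (p / 2) * (s - sstar) ^ 2 := by positivity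
  refine ⟨by linarith, fun hne => ?_⟩
  by_cases hus : u = ustar
  · have hs : s - sstar ≠ 0 := fun h => hne (Prod.ext hus (sub_eq_zero.1 h))
    have : 0 < (p / 2) * (s - sstar) ^ 2 := by positivity
    linarith
  · have hnorm : 0 < ‖u - ustar‖ := norm_sub_pos_iff.2 hus
    have : 0 < (1 / 2) * ‖u - ustar‖ ^ 2 := by positivity
    linarith
end
end

section
/- (Closed-form solution, CLF constraint active.) Fix x ∈ ℝⁿ and suppose 𝓛_g V(x) ≠ 0, F_V(x) ≥ 0, and F_b(x)·‖𝓛_g V(x)‖² − F_V(x)·⟨𝓛_g b(x), 𝓛_g V(x)⟩ > 0. Then the pair u* = π(x) − (F_V(x)/‖𝓛_g V(x)‖²)·𝓛_g V(x), s* = 1 satisfies F₂(u*) = 0 and F₁(u*, 1) > 0, is feasible, and is the unique global minimizer of the safety-stability filter quadratic program at x. -/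
open RealInnerProductSpace Matrix

noncomputable section

/-- Closed-form solution of the filter QP when only the CLF constraint is active:
under the stated sign conditions, `u* = π(x) − (F_V/‖𝓛_g V(x)‖²)·𝓛_g V(x)` and
`s* = 1` give the unique global minimizer, with `F₂(u*) = 0` and `F₁(u*, 1) > 0`. -/
theorem filter_solution_clf_active {n m : ℕ}
    (f : EuclideanSpace ℝ (Fin n) → EuclideanSpace ℝ (Fin n))
    (g : EuclideanSpace ℝ (Fin n) → Matrix (Fin n) (Fin m) ℝ)
    (b V : EuclideanSpace ℝ (Fin n) → ℝ)
    (α β : ℝ → ℝ) (γ : EuclideanSpace ℝ (Fin n) → ℝ)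
    (π : EuclideanSpace ℝ (Fin n) → EuclideanSpace ℝ (Fin m)) (p : ℝ)
    (hb : Differentiable ℝ b) (hV : Differentiable ℝ V)
    (hp : 0 < p)
    (hα : ExtendedClassK α) (hβ : ExtendedClassK β) (hβ1 : ∀ r, β r ≤ 1)
    (hγ : PosDefFun γ)
    (x : EuclideanSpace ℝ (Fin n))
    (hLgV : Lg g V x ≠ 0) (hFV : 0 ≤ FV f g V b β γ π x)
    (hcond : 0 < Fb f g b α π x * ‖Lg g V x‖ ^ 2 -
      FV f g V b β γ π x * ⟪Lg g b x, Lg g V x⟫)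
    (ustar : EuclideanSpace ℝ (Fin m))
    (hustar : ustar = π x - (FV f g V b β γ π x / ‖Lg g V x‖ ^ 2) • Lg g V x) :
    F2 f g V b β γ x ustar = 0 ∧
    0 < F1 f g b α x ustar 1 ∧
    (0 ≤ F1 f g b α x ustar 1 ∧ F2 f g V b β γ x ustar ≤ 0) ∧
    (∀ (u : EuclideanSpace ℝ (Fin m)) (s : ℝ),
      0 ≤ F1 f g b α x u s → F2 f g V b β γ x u ≤ 0 →
        Jobj π p x ustar 1 ≤ Jobj π p x u s ∧
        ((u, s) ≠ (ustar, 1) → Jobj π p x ustar 1 < Jobj π p x u s)) := by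
  have ha : 0 < ‖Lg g V x‖ ^ 2 := by positivity
  have hF2 : F2 f g V b β γ x ustar = 0 := by
    have h : F2 f g V b β γ x ustar = FV f g V b β γ π x
        - FV f g V b β γ π x / ‖Lg g V x‖ ^ 2 * ‖Lg g V x‖ ^ 2 := by
      rw [hustar, F2, inner_sub_right, real_inner_smul_right, real_inner_self_eq_norm_sq]
      simp only [FV]
      ring
    rw [h, div_mul_cancel₀ _ ha.ne', sub_self]
  have hF1 : 0 < F1 f g b α x ustar 1 := by
    have h : F1 f g b α x ustar 1 = (Fb f g b α π x * ‖Lg g V x‖ ^ 2 -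
        FV f g V b β γ π x * ⟪Lg g b x, Lg g V x⟫) / ‖Lg g V x‖ ^ 2 := by
      rw [hustar, F1, inner_sub_right, real_inner_smul_right, sub_div,
        mul_div_cancel_right₀ _ ha.ne', Fb]
      ring
    rw [h]
    exact div_pos hcond ha
  refine ⟨hF2, hF1, ⟨hF1.le, hF2.le⟩, fun u s _ hu => ?_⟩
  -- The objective exceeds its optimal value by at least the squared distance to the optimum.
  have key : Jobj π p x ustar 1 + (1 / 2 * ‖u - ustar‖ ^ 2 + p / 2 * (s - 1) ^ 2)
      ≤ Jobj π p x u s := by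
    have hc : 0 ≤ FV f g V b β γ π x / ‖Lg g V x‖ ^ 2 := div_nonneg hFV ha.le
    have hdir : ⟪Lg g V x, u - ustar⟫ ≤ 0 := by
      rw [inner_sub_right]
      unfold F2 at hu hF2
      linarith
    have hstep : ustar - π x = -((FV f g V b β γ π x / ‖Lg g V x‖ ^ 2) • Lg g V x) := by
      rw [hustar]
      abel
    have hcross : 0 ≤ ⟪u - ustar, ustar - π x⟫ := by
      rw [hstep, inner_neg_right, real_inner_smul_right, real_inner_comm]
      linarith [mul_nonpos_of_nonneg_of_nonpos hc hdir]
    have hexp := norm_add_sq_real (u - ustar) (ustar - π x)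
    rw [sub_add_sub_cancel] at hexp
    simp only [Jobj, hexp]
    linarith
  refine ⟨le_trans (le_add_of_nonneg_right (by positivity)) key, fun hne => ?_⟩
  refine lt_of_lt_of_le (lt_add_of_pos_right _ ?_) key
  by_cases hus : u = ustar
  · have hs : s - 1 ≠ 0 := fun h => hne (by rw [hus, sub_eq_zero.mp h])
    positivity
  · have hu0 : u - ustar ≠ 0 := sub_ne_zero.mpr hus
    positivity
end
end

section
/- (Equilibria lie on the boundary with both constraints active.) Fix x ∈ ℝⁿ with x ≠ 0 and b(x) ≥ 0, and suppose (u, s) ∈ ℝᵐ × ℝ satisfies the filter constraints F₁(u, s) ≥ 0 and F₂(u) ≤ 0 and x is an equilibrium of the closed loop, i.e., f(x) + g(x)u = 0. Then b(x) = 0, F₁(u, s) = 0, and F₂(u) = 0; that is, every nonzero closed-loop equilibrium in the set {b ≥ 0} lies on its zero level set {b = 0} and has both the CBF and the CLF constraints active. -/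
open RealInnerProductSpace Matrix

noncomputable section

/-- The closed-loop derivative of `h` is the sum of its Lie derivatives:
`𝓛_f h(x) + ⟪𝓛_g h(x), u⟫ = ⟪∇h(x), f(x) + g(x)u⟫`. -/
theorem Lf_add_inner_Lg {n m : ℕ}
    (f : EuclideanSpace ℝ (Fin n) → EuclideanSpace ℝ (Fin n))
    (g : EuclideanSpace ℝ (Fin n) → Matrix (Fin n) (Fin m) ℝ)
    (h : EuclideanSpace ℝ (Fin n) → ℝ)
    (x : EuclideanSpace ℝ (Fin n)) (u : EuclideanSpace ℝ (Fin m)) :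
    Lf f h x + ⟪Lg g h x, u⟫ = ⟪gradient h x, f x + Matrix.toEuclideanLin (g x) u⟫ := by
  rw [inner_add_right, Lf, Lg, ← Matrix.conjTranspose_eq_transpose_of_trivial,
    Matrix.toEuclideanLin_conjTranspose_eq_adjoint, LinearMap.adjoint_inner_left]

/-- Equilibria lie on the boundary with both constraints active: if `x ≠ 0`,
`b(x) ≥ 0`, `(u, s)` is feasible for the filter, and `x` is an equilibrium of the
closed loop (`f(x) + g(x)u = 0`), then `b(x) = 0`, `F₁(u, s) = 0` and `F₂(u) = 0`. -/
theorem equilibria_on_boundary {n m : ℕ}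
    (f : EuclideanSpace ℝ (Fin n) → EuclideanSpace ℝ (Fin n))
    (g : EuclideanSpace ℝ (Fin n) → Matrix (Fin n) (Fin m) ℝ)
    (b V : EuclideanSpace ℝ (Fin n) → ℝ)
    (α β : ℝ → ℝ) (γ : EuclideanSpace ℝ (Fin n) → ℝ)
    (π : EuclideanSpace ℝ (Fin n) → EuclideanSpace ℝ (Fin m)) (p : ℝ)
    (hb : Differentiable ℝ b) (hV : Differentiable ℝ V)
    (hp : 0 < p)
    (hα : ExtendedClassK α) (hβ : ExtendedClassK β) (hβ1 : ∀ r, β r ≤ 1)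
    (hγ : PosDefFun γ)
    (x : EuclideanSpace ℝ (Fin n)) (hx : x ≠ 0) (hbx : 0 ≤ b x)
    (u : EuclideanSpace ℝ (Fin m)) (s : ℝ)
    (hF1 : 0 ≤ F1 f g b α x u s) (hF2 : F2 f g V b β γ x u ≤ 0)
    (heq : f x + Matrix.toEuclideanLin (g x) u = 0) :
    b x = 0 ∧ F1 f g b α x u s = 0 ∧ F2 f g V b β γ x u = 0 := by
  have hder (h : EuclideanSpace ℝ (Fin n) → ℝ) : Lf f h x + ⟪Lg g h x, u⟫ = 0 := by
    rw [Lf_add_inner_Lg, heq, inner_zero_right]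
  obtain ⟨-, -, hα0⟩ := hα
  obtain ⟨-, hβmono, hβ0⟩ := hβ
  have hγx : 0 < γ x := hγ.2.2 x hx
  rw [F1, hder, zero_add]
  rw [F2, hder, zero_add] at hF2 ⊢
  have hβx : β (b x) ≤ β 0 := (nonpos_of_mul_nonpos_left hF2 hγx).trans_eq hβ0.symm
  have hb0 : b x = 0 := le_antisymm (hβmono.le_iff_le.1 hβx) hbx
  simp [hb0, hα0, hβ0]
end
end

section
/- (Incompatibility of the benchmark CLF and CBF.) Consider the system ẋ = x + u on ℝ² with V(x) = x₁² + x₂² and b(x) = x₁² + (x₂ − 4)² − 4. For every x₂ > 4, at the state x = (0, x₂) there exists no u = (u₁, u₂) ∈ ℝ² satisfying both the CBF constraint ⟨∇b(x), x + u⟩ + b(x) ≥ 0 and the CLF constraint ⟨∇V(x), x + u⟩ + V(x) ≤ 0; equivalently, there is no u₂ ∈ ℝ satisfying both (2x₂ − 8)u₂ + 3x₂² − 16x₂ + 12 ≥ 0 and 2x₂u₂ + 3x₂² ≤ 0. In particular, V and b are not compatible with α = id and γ = V. -/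
open RealInnerProductSpace

noncomputable section

/-- The benchmark CLF `V(x) = x₁² + x₂²`. -/
def Vbench : EuclideanSpace ℝ (Fin 2) → ℝ := fun x => x 0 ^ 2 + x 1 ^ 2

/-- The benchmark CBF `b(x) = x₁² + (x₂ − 4)² − 4`. -/
def bbench : EuclideanSpace ℝ (Fin 2) → ℝ := fun x => x 0 ^ 2 + (x 1 - 4) ^ 2 - 4

/-- The gradient of `z ↦ z₁² + (z₂ − c)² − d` paired with a direction `w`. -/
lemma inner_gradient_sq_add_sub_sq (c d : ℝ) (x w : EuclideanSpace ℝ (Fin 2)) :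
    ⟪gradient (fun z : EuclideanSpace ℝ (Fin 2) => z 0 ^ 2 + (z 1 - c) ^ 2 - d) x, w⟫ =
      2 * x 0 * w 0 + 2 * (x 1 - c) * w 1 := by
  have hcoord (i : Fin 2) : HasFDerivAt (fun z : EuclideanSpace ℝ (Fin 2) => z i)
      (EuclideanSpace.proj i : EuclideanSpace ℝ (Fin 2) →L[ℝ] ℝ) x :=
    (EuclideanSpace.proj i : EuclideanSpace ℝ (Fin 2) →L[ℝ] ℝ).hasFDerivAt
  have h := (((hcoord 0).pow 2).add (((hcoord 1).sub_const c).pow 2)).sub_const d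
  rw [gradient, InnerProductSpace.toDual_symm_apply]
  refine (congrArg (fun L : EuclideanSpace ℝ (Fin 2) →L[ℝ] ℝ => L w) h.fderiv).trans ?_
  simp

lemma inner_gradient_bbench (x w : EuclideanSpace ℝ (Fin 2)) :
    ⟪gradient bbench x, w⟫ = 2 * x 0 * w 0 + 2 * (x 1 - 4) * w 1 :=
  inner_gradient_sq_add_sub_sq 4 4 x w

lemma inner_gradient_Vbench (x w : EuclideanSpace ℝ (Fin 2)) :
    ⟪gradient Vbench x, w⟫ = 2 * x 0 * w 0 + 2 * x 1 * w 1 := by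
  have h : Vbench = fun z => z 0 ^ 2 + (z 1 - 0) ^ 2 - 0 := by
    funext z
    simp [Vbench]
  rw [h, inner_gradient_sq_add_sub_sq, sub_zero]

/-- The two scalar constraints on the second input component are jointly infeasible. -/
lemma scalar_constraints_infeasible {x₂ u₂ : ℝ} (hx : 4 < x₂)
    (hb : 0 ≤ (2 * x₂ - 8) * u₂ + 3 * x₂ ^ 2 - 16 * x₂ + 12)
    (hV : 2 * x₂ * u₂ + 3 * x₂ ^ 2 ≤ 0) : False := by
  have hu : 2 * u₂ + 3 * x₂ ≤ 0 := by
    by_contra! h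
    nlinarith
  nlinarith

lemma constraints_infeasible {x u : EuclideanSpace ℝ (Fin 2)} (h0 : x 0 = 0) (h1 : 4 < x 1)
    (hb : 0 ≤ ⟪gradient bbench x, x + u⟫ + bbench x)
    (hV : ⟪gradient Vbench x, x + u⟫ + Vbench x ≤ 0) : False := by
  simp only [inner_gradient_bbench, bbench, PiLp.add_apply, h0] at hb
  simp only [inner_gradient_Vbench, Vbench, PiLp.add_apply, h0] at hV
  exact scalar_constraints_infeasible (u₂ := u 1) h1 (by linarith) (by linarith)

/-- Incompatibility of the benchmark CLF and CBF for the system `ẋ = x + u`: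
at every state `(0, x₂)` with `x₂ > 4` no input satisfies both the CBF constraint
(with `α = id`) and the CLF constraint (with `γ = V`); equivalently the two scalar
inequalities in `u₂` are jointly infeasible; in particular no controller renders `V`
and `b` compatible. -/
theorem benchmark_incompatible :
    (∀ x : EuclideanSpace ℝ (Fin 2), x 0 = 0 → 4 < x 1 →
      ¬ ∃ u : EuclideanSpace ℝ (Fin 2),
        0 ≤ ⟪gradient bbench x, x + u⟫ + bbench x ∧
        ⟪gradient Vbench x, x + u⟫ + Vbench x ≤ 0) ∧
    (∀ x₂ : ℝ, 4 < x₂ →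
      ¬ ∃ u₂ : ℝ,
        0 ≤ (2 * x₂ - 8) * u₂ + 3 * x₂ ^ 2 - 16 * x₂ + 12 ∧
        2 * x₂ * u₂ + 3 * x₂ ^ 2 ≤ 0) ∧
    ¬ ∃ u : EuclideanSpace ℝ (Fin 2) → EuclideanSpace ℝ (Fin 2),
      ∀ x, 0 ≤ ⟪gradient bbench x, x + u x⟫ + bbench x ∧
        ⟪gradient Vbench x, x + u x⟫ + Vbench x ≤ 0 := by
  refine ⟨fun x h0 h1 ⟨u, hb, hV⟩ => constraints_infeasible h0 h1 hb hV,
    fun x₂ hx ⟨u₂, hb, hV⟩ => scalar_constraints_infeasible hx hb hV, ?_⟩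
  rintro ⟨u, hu⟩
  obtain ⟨hb, hV⟩ := hu !₂[0, 5]
  exact constraints_infeasible (by simp) (by norm_num) hb hV
end
end
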